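/- Let (a_0, (a_t, a_{t-1}, …, a_1)) belong to the inductively defined collection 𝒜, with t ≥ 2. Then for all indices 1 ≤ h ≤ l ≤ t the partial continued fraction is positive: [a_l, a_{l-1}, …, a_h] > 0. -/

import Mathlib

/-- Continued fraction value of a list `(a_t, a_{t-1}, …, a_1)` (head is `a_t`):
`cf [] = 0`, `cf (a :: L) = 1/(a - cf L)` (total division of `ℚ`, `1/0 = 0`).
In particular `cf [a₁] = 1/a₁`. -/
def cf : List ℚ → ℚ
  | [] => 0
  | a :: L => 1 / (a - cf L)

/-- The inductively defined collection `𝒜` of pairs `(a₀, (a_t, …, a_1))`. -/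
inductive chainSet : ℚ → List ℚ → Prop
  | base : chainSet 1 [1]
  | grow (a₀ a : ℚ) (L : List ℚ) : chainSet a₀ (a :: L) →
      chainSet (a₀ + 1) (1 :: (a + 1) :: L)
  | split (a₀ b c : ℚ) (L₁ L₂ : List ℚ) : chainSet a₀ (L₁ ++ b :: c :: L₂) →
      chainSet a₀ (L₁ ++ (b + 1) :: 1 :: (c + 1) :: L₂)

/-!
Evaluating `[a_t, …, a_1]` from the right, require every denominator met to be positive. This
condition on the whole list already controls its contiguous sublists: dropping entries on the left
skips some denominators, and dropping entries on the right replaces a positive tail value by `0`,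
which can only enlarge the denominators that remain. The rules generating `𝒜` preserve the
condition because `[1, c + 1, K] = 1 + [c, K]`, so that the `+ 1` on the entry `b` before an
inserted `1` cancels and `[b + 1, 1, c + 1, K] = [b, c, K]`.
-/

/-- Every denominator occurring in the evaluation of the continued fraction `cf L` is positive;
equivalently, every nonempty suffix of `L` has positive value. In particular the convention
`1 / 0 = 0` is never invoked. -/
def PosDenoms : List ℚ → Prop
  | [] => True
  | a :: L => PosDenoms L ∧ 0 < a - cf L

theorem cf_one_cons_add_one_cons {c : ℚ} {K : List ℚ} (hc : c - cf K ≠ 0)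
    (hc' : c + 1 - cf K ≠ 0) : cf (1 :: (c + 1) :: K) = 1 + cf (c :: K) := by
  have hsub : 1 - 1 / (c + 1 - cf K) = (c - cf K) / (c + 1 - cf K) := by
    field_simp
    ring
  simp only [cf, hsub]
  field_simp
  ring

namespace PosDenoms

variable {b c : ℚ} {K L M N : List ℚ}

theorem cf_pos (hL : PosDenoms L) (hne : L ≠ []) : 0 < cf L := by
  cases L with
  | nil => exact absurd rfl hne
  | cons a L => exact one_div_pos.mpr hL.2

theorem cf_nonneg (hL : PosDenoms L) : 0 ≤ cf L := by
  rcases eq_or_ne L [] with rfl | hne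
  · exact le_rfl
  · exact (hL.cf_pos hne).le

theorem of_append_right (h : PosDenoms (K ++ M)) : PosDenoms M := by
  induction K with
  | nil => exact h
  | cons a K ih => exact ih h.1

theorem cf_append_le_cf_append (h : PosDenoms (K ++ M)) (hle : cf N ≤ cf M) :
    cf (K ++ N) ≤ cf (K ++ M) := by
  induction K with
  | nil => exact hle
  | cons a K ih => exact one_div_le_one_div_of_le h.2 (sub_le_sub_left (ih h.1) a)

theorem append_of_cf_le (h : PosDenoms (K ++ M)) (hN : PosDenoms N) (hle : cf N ≤ cf M) :
    PosDenoms (K ++ N) := by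
  induction K with
  | nil => exact hN
  | cons a K ih =>
    exact ⟨ih h.1, h.2.trans_le (sub_le_sub_left (h.1.cf_append_le_cf_append hle) a)⟩

theorem of_append_left (h : PosDenoms (K ++ M)) : PosDenoms K := by
  have hK : PosDenoms (K ++ []) := h.append_of_cf_le trivial h.of_append_right.cf_nonneg
  rwa [List.append_nil] at hK

theorem of_infix (hL : PosDenoms L) (h : M <:+: L) : PosDenoms M := by
  obtain ⟨K, N, rfl⟩ := h
  exact hL.of_append_left.of_append_right

theorem one_cons_add_one_cons (h : PosDenoms (c :: K)) : PosDenoms (1 :: (c + 1) :: K) := by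
  obtain ⟨hK, hc⟩ := h
  have hlt : 1 < c + 1 - cf K := by linarith
  exact ⟨⟨hK, one_pos.trans hlt⟩, sub_pos.mpr ((div_lt_one (one_pos.trans hlt)).mpr hlt)⟩

theorem sub_cf_split (h : PosDenoms (c :: K)) (b : ℚ) :
    b + 1 - cf (1 :: (c + 1) :: K) = b - cf (c :: K) := by
  have hc : 0 < c - cf K := h.2
  rw [cf_one_cons_add_one_cons hc.ne' (by linarith)]
  ring

theorem cf_split (h : PosDenoms (c :: K)) (b : ℚ) :
    cf ((b + 1) :: 1 :: (c + 1) :: K) = cf (b :: c :: K) :=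
  congrArg (1 / ·) (h.sub_cf_split b)

theorem split (h : PosDenoms (b :: c :: K)) : PosDenoms ((b + 1) :: 1 :: (c + 1) :: K) :=
  ⟨h.1.one_cons_add_one_cons, (h.1.sub_cf_split b).symm ▸ h.2⟩

end PosDenoms

theorem chainSet.posDenoms {a₀ : ℚ} {L : List ℚ} (hA : chainSet a₀ L) : PosDenoms L := by
  induction hA with
  | base => simp [PosDenoms, cf]
  | grow _ a L _ ih => exact ih.one_cons_add_one_cons
  | split _ b c L₁ L₂ _ ih =>
    have htail : PosDenoms (b :: c :: L₂) := ih.of_append_right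
    exact ih.append_of_cf_le htail.split (htail.1.cf_split b).le

/-- If `(a₀, (a_t, …, a_1)) ∈ 𝒜` with `t ≥ 2`, then for all `1 ≤ h ≤ l ≤ t`
the partial continued fraction `[a_l, a_{l-1}, …, a_h]` (the continued fraction of the
contiguous sublist from `a_l` down to `a_h`, where `a_t` is the head of the list and
`a_1` its last entry) is positive. -/
theorem chainSet_partial_cf_pos (a₀ : ℚ) (L : List ℚ) (hA : chainSet a₀ L)
    (ht : 2 ≤ L.length) (h l : ℕ) (h1 : 1 ≤ h) (hhl : h ≤ l) (hlt : l ≤ L.length) :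
    0 < cf ((L.drop (L.length - l)).take (l - h + 1)) := by
  have hinfix : (L.drop (L.length - l)).take (l - h + 1) <:+: L :=
    (List.take_prefix _ _).isInfix.trans (List.drop_suffix _ _).isInfix
  have hne : (L.drop (L.length - l)).take (l - h + 1) ≠ [] := by
    rw [← List.length_pos_iff, List.length_take, List.length_drop]
    omega
  exact (hA.posDenoms.of_infix hinfix).cf_pos hne
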